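/- Let F be an algebraically closed field of characteristic ≠ 2, n ≥ 1, u₀ = u², and let σ̃ : F((u)) → F((u)) be the F((u₀))-algebra automorphism with σ̃(u) = −u (applied to matrices entrywise). Let g ∈ GL_n(F((u))) be such that gᵀ·Ĩ_n·σ̃(g) = c·Ĩ_n for some c ∈ F((u₀))^× and such that g·Λ̃_i = Λ̃_i for all i ∈ ℤ. Then c ∈ F[[u₀]]^×, and there exists a scalar x ∈ F[[u₀]]^× such that h = x^{-1}·g satisfies hᵀ·Ĩ_n·σ̃(h) = Ĩ_n and h·Λ̃_i = Λ̃_i for all i ∈ ℤ. In other words, I_GU(F) = F[[u₀]]^×·I_U(F). -/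

import Mathlib

noncomputable section
namespace Pap

variable (R : Type*) [CommRing R]

/-- `u^m` as a Laurent series. -/
def U (m : ℤ) : LaurentSeries R := HahnSeries.single m 1

/-- `R[[u]]` as a `R[[u]]`-submodule of `R((u))`. -/
def psRange : Submodule (PowerSeries R) (LaurentSeries R) :=
  LinearMap.range (Algebra.linearMap (PowerSeries R) (LaurentSeries R))

variable (n : ℕ)

/-- `R((u))^n`. -/
abbrev V := Fin n → LaurentSeries R

instance (priority := 10000) : AddCommGroup (V R n) := Pi.addCommGroup
instance (priority := 10000) : Module (PowerSeries R) (V R n) := Pi.module _ _ _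
instance (priority := 10000) : Module (LaurentSeries R) (V R n) := Pi.module _ _ _

/-- Multiplication by a Laurent series, as an `R[[u]]`-linear endomorphism of `R((u))^n`. -/
def smulV (a : LaurentSeries R) : V R n →ₗ[PowerSeries R] V R n where
  toFun x := a • x
  map_add' x y := smul_add a x y
  map_smul' c x := by
    funext i
    change a * (c • x i) = c • (a * x i)
    simp only [Algebra.smul_def]
    ring

/-- Image of a submodule under multiplication by a Laurent series. -/
def scaleL (a : LaurentSeries R) (L : Submodule (PowerSeries R) (V R n)) :
    Submodule (PowerSeries R) (V R n) := L.map (smulV R n a)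

/-- The standard lattice `R[[u]]^n`. -/
def stdLat : Submodule (PowerSeries R) (V R n) := Submodule.pi Set.univ fun _ => psRange R

/-- The quotient `B/(A ∩ B)`; for `A ≤ B` this is `B/A`. -/
abbrev subQuot (A B : Submodule (PowerSeries R) (V R n)) :=
  B ⧸ (A.comap B.subtype)

/-- A lattice in `R((u))^n`. -/
def IsLattice (L : Submodule (PowerSeries R) (V R n)) : Prop :=
  ∃ N : ℕ, scaleL R n (U R N) (stdLat R n) ≤ L ∧ L ≤ scaleL R n (U R (-(N : ℤ))) (stdLat R n) ∧
    Module.Finite R (RestrictScalars R (PowerSeries R)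
      (subQuot R n L (scaleL R n (U R (-(N : ℤ))) (stdLat R n)))) ∧
    Module.Projective R (RestrictScalars R (PowerSeries R)
      (subQuot R n L (scaleL R n (U R (-(N : ℤ))) (stdLat R n))))

/-- Rank one finite locally free module. -/
def RankOne (A : Type*) [CommRing A] (Q : Type*) [AddCommGroup Q] [Module A Q] : Prop :=
  Module.Finite A Q ∧ Module.Projective A Q ∧
    ∀ (P : Ideal A) [P.IsPrime],
      Module.finrank (Localization P.primeCompl) (LocalizedModule P.primeCompl Q) = 1

/-- Exponent of `u` bounding the `t`-th coordinate of the `j`-th standard lattice. -/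
def dex (j : ℤ) (t : Fin n) : ℤ := (j - ((t : ℤ) + 1)) / n + 1

/-- The standard lattice chain `Λ̃_j`, `j ∈ ℤ`. -/
def stdChain (j : ℤ) : Submodule (PowerSeries R) (V R n) :=
  Submodule.span (PowerSeries R)
    (Set.range fun t : Fin n =>
      (fun s => if s = t then U R (-(dex n j t)) else 0 : V R n))

/-- A complete periodic lattice chain in `R((u))^n`. -/
def IsLatticeChain (L : ℤ → Submodule (PowerSeries R) (V R n)) : Prop :=
  (∀ i, IsLattice R n (L i)) ∧ (∀ i, L i ≤ L (i + 1)) ∧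
    (∀ i, @RankOne R _ (RestrictScalars R (PowerSeries R) (subQuot R n (L i) (L (i + 1)))) _
      (RestrictScalars.module R (PowerSeries R) (subQuot R n (L i) (L (i + 1))))) ∧
    (∀ i, L ((n : ℤ) + i) = scaleL R n (U R (-1)) (L i))

/-- The action of an invertible matrix over `R((u))` on `R[[u]]`-submodules of `R((u))^n`. -/
def glLat (g : GL (Fin n) (LaurentSeries R)) (L : Submodule (PowerSeries R) (V R n)) :
    Submodule (PowerSeries R) (V R n) :=
  L.map ((Matrix.mulVecLin (g : Matrix (Fin n) (Fin n) (LaurentSeries R))).restrictScalars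
    (PowerSeries R))

/-- The antidiagonal matrix `Ĩ_n`. -/
def It : Matrix (Fin n) (Fin n) (LaurentSeries R) :=
  Matrix.of fun i j => if (i : ℕ) + (j : ℕ) = n - 1 then 1 else 0

/-- The image of an `R[[u]]`-submodule of `R((u))^n` under a matrix over `R((u))`. -/
def matLat (x : Matrix (Fin n) (Fin n) (LaurentSeries R))
    (L : Submodule (PowerSeries R) (V R n)) : Submodule (PowerSeries R) (V R n) :=
  L.map ((Matrix.mulVecLin x).restrictScalars (PowerSeries R))

/-- The `F((u²))`-automorphism `σ̃` of `F((u))` with `σ̃(u) = -u`. -/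
def sigmaT (F : Type*) [Field F] (x : LaurentSeries F) : LaurentSeries F where
  coeff k := (-1 : F) ^ k * x.coeff k
  isPWO_support' := x.isPWO_support'.mono (fun g hg => by
    simp only [Function.mem_support] at hg ⊢
    intro h; exact hg (by rw [h, mul_zero]))

end Pap
end


namespace Pap
open Matrix

theorem mem_ps {F : Type*} [Field F] (x : LaurentSeries F) :
    x ∈ psRange F ↔ ∀ k : ℤ, k < 0 → x.coeff k = 0 := by
  constructor
  · rintro ⟨p, rfl⟩ k hk
    change (HahnSeries.ofPowerSeries ℤ F p).coeff k = 0
    rw [PowerSeries.coeff_coe, if_pos hk]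
  · intro h
    refine ⟨PowerSeries.mk fun m => x.coeff m, ?_⟩
    change HahnSeries.ofPowerSeries ℤ F _ = x
    ext k
    rw [PowerSeries.coeff_coe]
    split_ifs with hk
    · exact (h k hk).symm
    · rw [PowerSeries.coeff_mk]
      congr 1
      omega

theorem ps_mul {F : Type*} [Field F] {x y : LaurentSeries F} (hx : x ∈ psRange F)
    (hy : y ∈ psRange F) : x * y ∈ psRange F := by
  obtain ⟨p, rfl⟩ := hx
  obtain ⟨q, rfl⟩ := hy
  exact ⟨p * q, by simp⟩

theorem ps_one {F : Type*} [Field F] : (1 : LaurentSeries F) ∈ psRange F :=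
  ⟨1, by simp⟩

theorem sig_supp {F : Type*} [Field F] (x : LaurentSeries F) :
    (sigmaT F x).support ⊆ x.support := by
  intro k hk
  simp only [HahnSeries.mem_support] at hk ⊢
  intro h
  exact hk (by change (-1 : F) ^ k * x.coeff k = 0; rw [h, mul_zero])

def sig (F : Type*) [Field F] : LaurentSeries F →+* LaurentSeries F where
  toFun := sigmaT F
  map_one' := by
    ext k
    change (-1 : F) ^ k * (1 : LaurentSeries F).coeff k = _
    rw [HahnSeries.coeff_one]
    split_ifs with h
    · simp [h]
    · simp
  map_zero' := by
    ext k
    change (-1 : F) ^ k * (0 : LaurentSeries F).coeff k = _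
    simp
  map_add' x y := by
    ext k
    change (-1 : F) ^ k * (x + y).coeff k = (-1 : F) ^ k * x.coeff k + (-1 : F) ^ k * y.coeff k
    rw [HahnSeries.coeff_add]
    simp [mul_add]
  map_mul' x y := by
    ext k
    change (-1 : F) ^ k * (x * y).coeff k = _
    rw [HahnSeries.coeff_mul_left' x.isPWO_support (sig_supp x), HahnSeries.coeff_mul,
      Finset.mul_sum]
    symm
    have h2 : (sigmaT F y).support = y.support := by
      ext m
      simp only [HahnSeries.mem_support]
      change (-1 : F) ^ m * y.coeff m ≠ 0 ↔ _
      have : (-1 : F) ^ m ≠ 0 := zpow_ne_zero _ (by simp)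
      simp [this]
    refine Finset.sum_congr (by ext; simp [h2]) ?_
    rintro ⟨a, b⟩ hab
    simp only [Finset.mem_antidiagonal] at hab
    have : a + b = k := by simp at hab; exact hab.2.2
    change (-1 : F) ^ a * x.coeff a * ((-1 : F) ^ b * y.coeff b) = _
    rw [← this, zpow_add₀ (by simp)]
    ring

theorem sig_coeff {F : Type*} [Field F] (x : LaurentSeries F) (k : ℤ) :
    (sig F x).coeff k = (-1 : F) ^ k * x.coeff k := rfl

theorem sig_ps {F : Type*} [Field F] {x : LaurentSeries F} (hx : x ∈ psRange F) :
    sig F x ∈ psRange F := by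
  rw [mem_ps] at hx ⊢
  intro k hk
  rw [sig_coeff, hx k hk, mul_zero]

theorem sig_fix {F : Type*} [Field F] (hchar : (2 : F) ≠ 0) (x : LaurentSeries F) :
    sig F x = x ↔ ∀ k : ℤ, Odd k → x.coeff k = 0 := by
  constructor
  · intro h k hk
    have := congrArg (fun y => HahnSeries.coeff y k) h
    simp only [sig_coeff, hk.neg_one_zpow] at this
    have h2 : 2 * x.coeff k = 0 := by linear_combination -this
    simpa [hchar] using h2
  · intro h
    ext k
    rw [sig_coeff]
    rcases Int.even_or_odd k with hk | hk
    · rw [hk.neg_one_zpow, one_mul]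
    · rw [h k hk, mul_zero]

theorem sig_inv {F : Type*} [Field F] (x : (LaurentSeries F)ˣ) (h : sig F x = x) :
    sig F (x⁻¹ : (LaurentSeries F)ˣ) = (x⁻¹ : (LaurentSeries F)ˣ) := by
  have h1 : sig F x * sig F (x⁻¹ : (LaurentSeries F)ˣ) = 1 := by
    rw [← map_mul, Units.mul_inv, map_one]
  rw [h] at h1
  exact (Units.inv_eq_of_mul_eq_one_right h1).symm

theorem dex_zero {n : ℕ} (t : Fin n) : dex n 0 t = 0 := by
  unfold dex
  have h := t.isLt
  have : (0 - ((t : ℤ) + 1)) / (n : ℤ) = -1 := by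
    rw [Int.ediv_eq_iff_of_pos (by omega)]
    constructor <;> nlinarith
  rw [this]; rfl

theorem U_zero {F : Type*} [Field F] : U F 0 = 1 := rfl

theorem chain0_le {F : Type*} [Field F] {n : ℕ} {v : V F n} (hv : v ∈ stdChain F n 0) (i : Fin n) :
    v i ∈ psRange F := by
  have : stdChain F n 0 ≤ stdLat F n := by
    refine Submodule.span_le.2 ?_
    rintro _ ⟨t, rfl⟩
    intro s _
    simp only [dex_zero, neg_zero, U_zero]
    split_ifs
    · exact ps_one
    · exact Submodule.zero_mem _
  exact this hv i trivial

theorem single_mem {F : Type*} [Field F] {n : ℕ} (j : Fin n) :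
    (Pi.single j 1 : V F n) ∈ stdChain F n 0 := by
  refine Submodule.subset_span ⟨j, ?_⟩
  funext s
  simp only [dex_zero, neg_zero, U_zero, Pi.single_apply]

theorem entries {F : Type*} [Field F] {n : ℕ} (g : GL (Fin n) (LaurentSeries F))
    (h : glLat F n g (stdChain F n 0) = stdChain F n 0) (i j : Fin n) :
    (g : Matrix (Fin n) (Fin n) (LaurentSeries F)) i j ∈ psRange F := by
  have h1 : (g : Matrix (Fin n) (Fin n) (LaurentSeries F)) *ᵥ (Pi.single j 1 : V F n)
      ∈ stdChain F n 0 := by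
    rw [← h]
    exact ⟨_, single_mem j, rfl⟩
  have := chain0_le h1 i
  simpa using this

theorem glLat_inv {F : Type*} [Field F] {n : ℕ} (g : GL (Fin n) (LaurentSeries F))
    (L : Submodule (PowerSeries F) (V F n)) (h : glLat F n g L = L) :
    glLat F n g⁻¹ L = L := by
  conv_lhs => rw [← h]
  unfold glLat
  rw [← Submodule.map_comp]
  convert Submodule.map_id L
  refine LinearMap.ext fun v => ?_
  change (g⁻¹).val *ᵥ (g.val *ᵥ v) = v
  rw [mulVec_mulVec, Units.inv_mul, one_mulVec]

theorem c_mem {F : Type*} [Field F] {n : ℕ} (hn : 1 ≤ n)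
    (g : Matrix (Fin n) (Fin n) (LaurentSeries F)) (c : LaurentSeries F)
    (hg : ∀ i j, g i j ∈ psRange F)
    (hc : gᵀ * It F n * g.map (sig F) = c • It F n) : c ∈ psRange F := by
  have h := congrFun (congrFun hc ⟨0, hn⟩) ⟨n - 1, by omega⟩
  have h2 : (c • It F n) ⟨0, hn⟩ ⟨n - 1, by omega⟩ = c := by simp [It]
  rw [← h2, ← h, mul_apply]
  refine Submodule.sum_mem _ fun k _ => ps_mul ?_ (sig_ps (hg _ _))
  rw [mul_apply]
  refine Submodule.sum_mem _ fun l _ => ps_mul (hg _ _) ?_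
  simp only [It, of_apply]
  split_ifs
  · exact ps_one
  · exact Submodule.zero_mem _

theorem inv_rel {F : Type*} [Field F] {n : ℕ}
    (g : GL (Fin n) (LaurentSeries F)) (c : (LaurentSeries F)ˣ)
    (hc : g.valᵀ * It F n * g.val.map (sig F) = c.val • It F n) :
    (g⁻¹).valᵀ * It F n * (g⁻¹).val.map (sig F) = (c⁻¹).val • It F n := by
  have h1 : (g⁻¹).valᵀ * g.valᵀ = 1 := by
    rw [← transpose_mul, Units.mul_inv, transpose_one]
  have h2 : g.val.map (sig F) * (g⁻¹).val.map (sig F) = 1 := by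
    rw [← Matrix.map_mul, Units.mul_inv, Matrix.map_one _ (map_zero _) (map_one _)]
  have h3 : It F n = (c⁻¹).val • (g.valᵀ * It F n * g.val.map (sig F)) := by
    rw [hc, smul_smul, Units.inv_mul, one_smul]
  conv_lhs => rw [h3]
  rw [Matrix.mul_smul, Matrix.smul_mul]
  congr 1
  calc _ = ((g⁻¹).valᵀ * g.valᵀ) * It F n * (g.val.map (sig F) * (g⁻¹).val.map (sig F)) := by
        simp only [Matrix.mul_assoc]
    _ = _ := by rw [h1, h2, Matrix.one_mul, Matrix.mul_one]

theorem ps_sqrt {F : Type*} [Field F] [IsAlgClosed F] (hchar : (2 : F) ≠ 0)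
    (p : PowerSeries F) (hp : IsUnit p) : ∃ q : PowerSeries F, q * q = p := by
  have hp0 : PowerSeries.constantCoeff p ≠ 0 :=
    (hp.map (PowerSeries.constantCoeff (R := F))).ne_zero
  obtain ⟨z, hz⟩ := IsAlgClosed.exists_eq_mul_self (PowerSeries.constantCoeff p)
  have hz0 : z ≠ 0 := by rintro rfl; exact hp0 (by simpa using hz)
  have hH : HenselianRing (PowerSeries F) (Ideal.span {PowerSeries.X}) := inferInstance
  obtain ⟨a, ha, _⟩ := hH.is_henselian (Polynomial.X ^ 2 - Polynomial.C p)
    (Polynomial.monic_X_pow_sub_C p two_ne_zero) (PowerSeries.C z)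
    (by
      rw [Ideal.mem_span_singleton, PowerSeries.X_dvd_iff]
      simp [hz, sq])
    (by
      refine IsUnit.map _ ?_
      rw [PowerSeries.isUnit_iff_constantCoeff]
      have h2 : (1 : F) + 1 ≠ 0 := by rwa [one_add_one_eq_two]
      simp [hz0, h2])
  refine ⟨a, ?_⟩
  simp [Polynomial.IsRoot] at ha
  linear_combination ha

theorem exists_x {F : Type*} [Field F] [IsAlgClosed F] (hchar : (2 : F) ≠ 0)
    (c : (LaurentSeries F)ˣ) (h1 : c.val ∈ psRange F) (h2 : (c⁻¹).val ∈ psRange F)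
    (h3 : sig F c = c) :
    ∃ x : (LaurentSeries F)ˣ, x.val ∈ psRange F ∧ (x⁻¹).val ∈ psRange F ∧ sig F x = x ∧
      x * x = c := by
  obtain ⟨p, hp⟩ := h1
  obtain ⟨q, hq⟩ := h2
  have hinj : Function.Injective (algebraMap (PowerSeries F) (LaurentSeries F)) :=
    HahnSeries.ofPowerSeries_injective
  have hpq : p * q = 1 := by
    apply hinj
    rw [map_mul, map_one]
    change Algebra.linearMap (PowerSeries F) (LaurentSeries F) p *
      Algebra.linearMap (PowerSeries F) (LaurentSeries F) q = 1
    rw [hp, hq, Units.mul_inv]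
  obtain ⟨r, hr⟩ := ps_sqrt hchar p (IsUnit.of_mul_eq_one _ hpq)
  have hrr : r * (r * q) = 1 := by rw [← mul_assoc, hr, hpq]
  let ru : (PowerSeries F)ˣ := ⟨r, r * q, hrr, by rw [mul_comm]; exact hrr⟩
  let x : (LaurentSeries F)ˣ :=
    Units.map (algebraMap (PowerSeries F) (LaurentSeries F)).toMonoidHom ru
  have hx : x * x = c := by
    ext1
    change algebraMap (PowerSeries F) (LaurentSeries F) r * algebraMap _ _ r = c.val
    rw [← map_mul, hr]
    exact hp
  refine ⟨x, ⟨r, rfl⟩, ⟨r * q, rfl⟩, ?_, hx⟩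
  have hx' : x.val * x.val = c.val := by rw [← hx]; rfl
  have hs : sig F x.val * sig F x.val = x.val * x.val := by
    rw [← map_mul, hx', h3]
  rcases mul_self_eq_mul_self_iff.1 hs with h | h
  · exact h
  · exfalso
    have h0 := congrArg (fun y => HahnSeries.coeff y 0) h
    have hx0 : x.val.coeff 0 = PowerSeries.constantCoeff r := by
      change (HahnSeries.ofPowerSeries ℤ F r).coeff 0 = _
      rw [PowerSeries.coeff_coe]
      simp
    simp only [sig_coeff, zpow_zero, one_mul, HahnSeries.coeff_neg] at h0
    have h4 : 2 * x.val.coeff 0 = 0 := by linear_combination h0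
    rw [hx0] at h4
    have h5 : PowerSeries.constantCoeff r ≠ 0 :=
      (ru.isUnit.map (PowerSeries.constantCoeff (R := F))).ne_zero
    exact mul_ne_zero hchar h5 h4

theorem smul_lat {F : Type*} [Field F] {n : ℕ} (g : GL (Fin n) (LaurentSeries F))
    (L : Submodule (PowerSeries F) (V F n)) (h : glLat F n g L = L)
    (x : (LaurentSeries F)ˣ) (h1 : x.val ∈ psRange F) (h2 : (x⁻¹).val ∈ psRange F) :
    matLat F n ((x⁻¹).val • g.val) L = L := by
  obtain ⟨p, hp⟩ := h1
  obtain ⟨q, hq⟩ := h2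
  have hps : ∀ v : V F n, p • v = x.val • v := by
    intro v; funext i
    change p • v i = x.val * v i
    rw [Algebra.smul_def, ← hp]; rfl
  have hqs : ∀ v : V F n, q • v = (x⁻¹).val • v := by
    intro v; funext i
    change q • v i = (x⁻¹).val * v i
    rw [Algebra.smul_def, ← hq]; rfl
  apply le_antisymm
  · rintro _ ⟨v, hv, rfl⟩
    change ((x⁻¹).val • g.val) *ᵥ v ∈ L
    rw [smul_mulVec, ← hqs]
    refine L.smul_mem _ ?_
    rw [← h]
    exact ⟨v, hv, rfl⟩
  · intro w hw
    rw [← h] at hw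
    obtain ⟨v, hv, rfl⟩ := hw
    refine ⟨p • v, L.smul_mem _ hv, ?_⟩
    change ((x⁻¹).val • g.val) *ᵥ (p • v) = g.val *ᵥ v
    rw [hps, smul_mulVec, mulVec_smul, smul_smul, Units.inv_mul, one_smul]

end Pap

open Pap Matrix in
/-- `I_GU(F) = F[[u₀]]^× · I_U(F)` for the ramified unitary group (`u₀ = u²`). -/
theorem stmt10 (F : Type*) [Field F] [IsAlgClosed F] (hchar : (2 : F) ≠ 0)
    (n : ℕ) (hn : 1 ≤ n) (g : GL (Fin n) (LaurentSeries F)) (c : (LaurentSeries F)ˣ)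
    (hceven : ∀ k : ℤ, Odd k → (c : LaurentSeries F).coeff k = 0)
    (hc : (g : Matrix (Fin n) (Fin n) (LaurentSeries F))ᵀ * It F n *
        ((g : Matrix (Fin n) (Fin n) (LaurentSeries F)).map (sigmaT F))
      = (c : LaurentSeries F) • It F n)
    (hstab : ∀ i : ℤ, glLat F n g (stdChain F n i) = stdChain F n i) :
    ((c : LaurentSeries F) ∈ psRange F ∧
      ((c⁻¹ : (LaurentSeries F)ˣ) : LaurentSeries F) ∈ psRange F ∧
      ∀ k : ℤ, Odd k → ((c⁻¹ : (LaurentSeries F)ˣ) : LaurentSeries F).coeff k = 0) ∧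
    ∃ x : (LaurentSeries F)ˣ,
      ((x : LaurentSeries F) ∈ psRange F ∧
        (∀ k : ℤ, Odd k → (x : LaurentSeries F).coeff k = 0) ∧
        ((x⁻¹ : (LaurentSeries F)ˣ) : LaurentSeries F) ∈ psRange F ∧
        (∀ k : ℤ, Odd k → ((x⁻¹ : (LaurentSeries F)ˣ) : LaurentSeries F).coeff k = 0)) ∧
      (((x⁻¹ : (LaurentSeries F)ˣ) : LaurentSeries F) •
            (g : Matrix (Fin n) (Fin n) (LaurentSeries F)))ᵀ * It F n *
          ((((x⁻¹ : (LaurentSeries F)ˣ) : LaurentSeries F) •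
            (g : Matrix (Fin n) (Fin n) (LaurentSeries F))).map (sigmaT F))
        = It F n ∧
      ∀ i : ℤ,
        matLat F n
          (((x⁻¹ : (LaurentSeries F)ˣ) : LaurentSeries F) •
            (g : Matrix (Fin n) (Fin n) (LaurentSeries F)))
          (stdChain F n i) = stdChain F n i := by
  have hc' : g.valᵀ * It F n * g.val.map (sig F) = c.val • It F n := hc
  have hcm := c_mem hn g.val c.val (entries g (hstab 0)) hc'
  have hcim := c_mem hn (g⁻¹).val (c⁻¹).val (entries g⁻¹ (glLat_inv g _ (hstab 0)))
    (inv_rel g c hc')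
  have hcs := (sig_fix hchar c.val).2 hceven
  obtain ⟨x, hx1, hx2, hx3, hx4⟩ := exists_x hchar c hcm hcim hcs
  have hxi := sig_inv x hx3
  refine ⟨⟨hcm, hcim, (sig_fix hchar _).1 (sig_inv c hcs)⟩, x,
    ⟨hx1, (sig_fix hchar _).1 hx3, hx2, (sig_fix hchar _).1 hxi⟩, ?_,
    fun i => smul_lat g _ (hstab i) x hx1 hx2⟩
  have hm : ((x⁻¹).val • g.val).map (sigmaT F) = (x⁻¹).val • g.val.map (sig F) := by
    ext1 i j
    change sig F ((x⁻¹).val * g.val i j) = (x⁻¹).val * sig F (g.val i j)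
    rw [map_mul, hxi]
  rw [hm, transpose_smul, Matrix.smul_mul, Matrix.smul_mul, Matrix.mul_smul, hc', smul_smul,
    smul_smul, ← hx4, ← Units.val_mul, ← Units.val_mul]
  simp
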